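/- L² convergence of quadratic variation sums with adapted continuous bounded weights: if ξ is a continuous bounded process with ξ(t_{i+1}) independent of Δw_{t_i} := w_{t_{i+1}} − w_{t_i} for each i (e.g., measurable with respect to the future increments of w after t_{i+1}), then Σ_i ξ(t_{i+1})(Δw_{t_i})² → ∫₀^T ξ(s) ds in mean square as the partition mesh tends to 0. -/

import Mathlib

/-!
Write `hᵢ = tᵢ₊₁ - tᵢ`, `Dᵢ = w(tᵢ₊₁) - w(tᵢ)` and `Xᵢ = Dᵢ² - hᵢ`. The `Xᵢ` are centred and pairwise
independent, and by Gaussian scaling `E Xᵢ² ≤ K hᵢ²` and `E Xᵢ⁴ ≤ K hᵢ⁴` for an absolute constant `K`.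
For a fixed `δ > 0` let `cᵢ` be the largest multiple of `δ` not exceeding `tᵢ₊₁`. Then
`∑ ξ(tᵢ₊₁) Dᵢ² - ∫ ξ = A + B + R` with

* `A = ∑ (ξ(tᵢ₊₁) - ξ(cᵢ)) Xᵢ`. Cauchy–Schwarz and Young's inequality bound `E A²` by a multiple of `η`
  as soon as `E (ξ(tᵢ₊₁) - ξ(cᵢ))⁴ ≤ η²` for all `i` (`integral_sq_weighted_sum_le`). Since `ξ` is
  continuous and bounded, it is uniformly continuous from `[0,T]` to `L⁴`, so a small `δ` achieves this
  for every partition at once (`exists_L4_modulus`).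
* `B = ∑ ξ(cᵢ) Xᵢ`. Grouping the indices by the finitely many values of `cᵢ` leaves unweighted sums of
  the `Xᵢ`, whose second moments are at most `K T · mesh` (`integral_sq_block_sum_le`).
* `R = ∑ ξ(tᵢ₊₁) hᵢ - ∫ ξ`, a Riemann sum error, which tends to zero pathwise and is bounded, hence tends
  to zero in mean square.

So `δ` is chosen first, to make `E A²` small, and then the mesh tends to zero.
-/


open MeasureTheory ProbabilityTheory Filter

variable {Ω : Type*} [MeasurableSpace Ω]

/-- `W` is a standard one-dimensional Brownian motion (for times in `[0,∞)`). -/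
def IsBrownianMotion (μ : Measure Ω) (W : ℝ → Ω → ℝ) : Prop :=
  (∀ t : ℝ, Measurable (W t)) ∧
  (∀ᵐ ω ∂μ, Continuous fun t => W t ω) ∧
  (∀ᵐ ω ∂μ, W 0 ω = 0) ∧
  (∀ s t : ℝ, 0 ≤ s → s ≤ t →
    Measure.map (fun ω => W t ω - W s ω) μ = gaussianReal 0 (Real.toNNReal (t - s))) ∧
  (∀ s t : ℝ, 0 ≤ s → s ≤ t →
    Indep (MeasurableSpace.comap (fun ω => W t ω - W s ω) (borel ℝ))
      (⨆ u ∈ Set.Icc (0:ℝ) s, MeasurableSpace.comap (W u) (borel ℝ)) μ)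

/-- `W` is a standard one-dimensional Brownian motion on the time interval `[0,T]`. -/
def IsBrownianMotionOn (T : ℝ) (μ : Measure Ω) (W : ℝ → Ω → ℝ) : Prop :=
  (∀ t ∈ Set.Icc (0:ℝ) T, Measurable (W t)) ∧
  (∀ᵐ ω ∂μ, ContinuousOn (fun t => W t ω) (Set.Icc 0 T)) ∧
  (∀ᵐ ω ∂μ, W 0 ω = 0) ∧
  (∀ s t : ℝ, 0 ≤ s → s ≤ t → t ≤ T →
    Measure.map (fun ω => W t ω - W s ω) μ = gaussianReal 0 (Real.toNNReal (t - s))) ∧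
  (∀ s t : ℝ, 0 ≤ s → s ≤ t → t ≤ T →
    Indep (MeasurableSpace.comap (fun ω => W t ω - W s ω) (borel ℝ))
      (⨆ u ∈ Set.Icc (0:ℝ) s, MeasurableSpace.comap (W u) (borel ℝ)) μ)

/-- `I` is the Itô integral `∫_a^b ξ dW`, characterized as the mean-square limit of
left-endpoint Riemann–Itô sums along uniform partitions of `[a,b]`. -/
def IsItoIntegral (μ : Measure Ω) (W : ℝ → Ω → ℝ) (ξ : ℝ → Ω → ℝ)
    (a b : ℝ) (I : Ω → ℝ) : Prop :=
  Tendsto (fun n : ℕ =>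
      ∫ ω, (∑ i ∈ Finset.range n,
          ξ (a + (b - a) * (i : ℝ) / (n : ℝ)) ω *
            (W (a + (b - a) * ((i : ℝ) + 1) / (n : ℝ)) ω -
              W (a + (b - a) * (i : ℝ) / (n : ℝ)) ω) - I ω) ^ 2 ∂μ)
    atTop (nhds 0)

/-! ### Moments of the centred squared Gaussian increments -/

/-- The sum of the second and fourth moments of `Z² - 1` for a standard Gaussian `Z`; a common
constant for the moment bounds of the centred squared increments. -/
noncomputable def chiSqBound : ℝ :=
  ∫ x, (x ^ 2 - 1) ^ 2 ∂(gaussianReal 0 1) + ∫ x, (x ^ 2 - 1) ^ 4 ∂(gaussianReal 0 1)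

lemma memLp_sq_sub_gaussianReal (p : ℕ) (v : NNReal) (c : ℝ) :
    MemLp (fun x : ℝ => x ^ 2 - c) p (gaussianReal 0 v) := by
  refine MemLp.sub ?_ (memLp_const c)
  have h := memLp_id_gaussianReal (μ := 0) (v := v) (2 * p : NNReal)
  have h2 := h.norm_rpow_div (q := 2)
  refine (memLp_congr_norm (f := fun x : ℝ => ‖id x‖ ^ (2:ENNReal).toReal) ?_ ?_ ?_).1 ?_
  · exact (measurable_id.norm.pow_const _).aestronglyMeasurable
  · fun_prop
  · simp
  · convert h2 using 1
    push_cast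
    rw [mul_comm, ENNReal.mul_div_cancel_right] <;> simp

section Increment
variable {μ : Measure Ω} {D : Ω → ℝ} {h : ℝ}

lemma memLp_incr_sq_sub (hD : Measurable D)
    (hmap : μ.map D = gaussianReal 0 h.toNNReal) (p : ℕ) :
    MemLp (fun ω => D ω ^ 2 - h) p μ := by
  have := memLp_sq_sub_gaussianReal p h.toNNReal h
  rw [← hmap] at this
  exact this.comp_of_map hD.aemeasurable

/-- Gaussian scaling: a centred Gaussian `D` of variance `h` is distributed as `√h Z`, so
`D² - h` is distributed as `h (Z² - 1)`. -/
lemma integral_incr_sq_sub_pow (hD : Measurable D) (h0 : 0 ≤ h)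
    (hmap : μ.map D = gaussianReal 0 h.toNNReal) (q : ℕ) :
    ∫ ω, (D ω ^ 2 - h) ^ q ∂μ = h ^ q * ∫ x, (x ^ 2 - 1) ^ q ∂(gaussianReal 0 1) := by
  have h1 : gaussianReal 0 h.toNNReal = (gaussianReal 0 1).map (√h * ·) := by
    rw [gaussianReal_map_const_mul]
    congr 1
    · simp
    · ext; simp [Real.sq_sqrt h0, h0]
  have h2 : ∫ ω, (D ω ^ 2 - h) ^ q ∂μ = ∫ x, (x ^ 2 - h) ^ q ∂(μ.map D) := by
    rw [integral_map hD.aemeasurable]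
    exact (Measurable.aestronglyMeasurable (by fun_prop))
  rw [h2, hmap, h1, integral_map (by fun_prop) (Measurable.aestronglyMeasurable (by fun_prop)),
    ← integral_const_mul]
  congr 1 with x
  rw [← mul_pow, mul_pow, Real.sq_sqrt h0]
  ring

lemma integral_incr_sq_sub (hD : Measurable D) (h0 : 0 ≤ h)
    (hmap : μ.map D = gaussianReal 0 h.toNNReal) :
    ∫ ω, (D ω ^ 2 - h) ∂μ = 0 := by
  have := integral_incr_sq_sub_pow hD h0 hmap 1
  simp only [pow_one] at this
  have h1 : ∫ x, x ^ 2 ∂(gaussianReal 0 1) = 1 := by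
    have := variance_of_integral_eq_zero (μ := gaussianReal 0 1) (X := id) (by fun_prop)
      (by simp)
    rw [variance_id_gaussianReal] at this
    simpa using this.symm
  have h2 : Integrable (fun x : ℝ => x ^ 2) (gaussianReal 0 1) := by
    have := (memLp_sq_sub_gaussianReal 1 1 0)
    simp only [Nat.cast_one, sub_zero] at this
    exact memLp_one_iff_integrable.1 this
  rw [this, integral_sub h2 (integrable_const _), h1]
  simp

lemma integral_even_pow_nonneg (q : ℕ) (hq : Even q) :
    0 ≤ ∫ x : ℝ, (x ^ 2 - 1) ^ q ∂(gaussianReal 0 1) :=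
  integral_nonneg fun _ => hq.pow_nonneg _

lemma chiSqBound_nonneg : 0 ≤ chiSqBound :=
  add_nonneg (integral_even_pow_nonneg 2 (by decide)) (integral_even_pow_nonneg 4 (by decide))

lemma integral_incr_sq_sub_pow_two_le (hD : Measurable D) (h0 : 0 ≤ h)
    (hmap : μ.map D = gaussianReal 0 h.toNNReal) :
    ∫ ω, (D ω ^ 2 - h) ^ 2 ∂μ ≤ chiSqBound * h ^ 2 := by
  rw [integral_incr_sq_sub_pow hD h0 hmap, mul_comm]
  gcongr
  exact le_add_of_nonneg_right (integral_even_pow_nonneg 4 (by decide))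

lemma integral_incr_sq_sub_pow_four_le (hD : Measurable D) (h0 : 0 ≤ h)
    (hmap : μ.map D = gaussianReal 0 h.toNNReal) :
    ∫ ω, (D ω ^ 2 - h) ^ 4 ∂μ ≤ chiSqBound * h ^ 4 := by
  rw [integral_incr_sq_sub_pow hD h0 hmap, mul_comm]
  gcongr
  exact le_add_of_nonneg_left (integral_even_pow_nonneg 2 (by decide))

end Increment

/-! ### Second moments of weighted sums -/

section Sums
variable {μ : Measure Ω} [IsProbabilityMeasure μ]

/-- Second moment of a weighted sum `∑ aᵢ Xᵢ` whose weights are small in `L⁴`. No independence is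
required: `a² X²` is split into fourth moments of `a` and of `X`. -/
lemma integral_sq_weighted_sum_le (s : Finset ℕ) (h : ℕ → ℝ) (hpos : ∀ i ∈ s, 0 < h i)
    (a X : ℕ → Ω → ℝ) (ha : ∀ i, Measurable (a i)) {c K η : ℝ} (hac : ∀ i ω, |a i ω| ≤ c)
    (hη : 0 < η) (ha4 : ∀ i ∈ s, ∫ ω, a i ω ^ 4 ∂μ ≤ η ^ 2)
    (hX : ∀ i ∈ s, MemLp (X i) 4 μ) (hX4 : ∀ i ∈ s, ∫ ω, X i ω ^ 4 ∂μ ≤ K * h i ^ 4) :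
    ∫ ω, (∑ i ∈ s, a i ω * X i ω) ^ 2 ∂μ ≤ (∑ i ∈ s, h i) ^ 2 * (η * (1 + K) / 2) := by
  have hXi : ∀ i ∈ s, Integrable (fun ω => X i ω ^ 4) μ := fun i hi => by
    have := (hX i hi).integrable_norm_pow (by norm_num)
    simpa [Even.pow_abs (show Even 4 by decide)] using this
  have hai : ∀ i, Integrable (fun ω => a i ω ^ 4) μ := fun i =>
    Integrable.of_bound (((ha i).pow_const 4).aestronglyMeasurable) (c ^ 4)
      (.of_forall fun ω => by
        rw [norm_pow]; exact pow_le_pow_left₀ (norm_nonneg _) (hac i ω) 4)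
  set T := ∑ i ∈ s, h i with hT
  have hT0 : 0 ≤ T := Finset.sum_nonneg fun i hi => (hpos i hi).le
  have key : ∀ ω, (∑ i ∈ s, a i ω * X i ω) ^ 2 ≤
      T * ∑ i ∈ s, (h i * (1 / (2 * η)) * a i ω ^ 4 + η / (2 * h i ^ 3) * X i ω ^ 4) := by
    intro ω
    -- Cauchy–Schwarz with weights `h i`, whose total is `T`; then Young's inequality, scaled so that
    -- both fourth moments contribute the order `η * h i`.
    have h1 := Finset.sum_sq_le_sum_mul_sum_of_sq_le_mul s
      (r := fun i => a i ω * X i ω) (f := h) (g := fun i => (a i ω * X i ω) ^ 2 / h i)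
      (fun i hi => (hpos i hi).le) (fun i hi => by have := hpos i hi; positivity)
      (fun i hi => by have := (hpos i hi).ne'; exact le_of_eq (by field_simp))
    refine h1.trans (mul_le_mul_of_nonneg_left (Finset.sum_le_sum fun i hi => ?_) hT0)
    have hh := hpos i hi
    have e : h i * (1 / (2 * η)) * a i ω ^ 4 + η / (2 * h i ^ 3) * X i ω ^ 4
      - (a i ω * X i ω) ^ 2 / h i
      = (h i ^ 2 * a i ω ^ 2 - η * X i ω ^ 2) ^ 2 / (2 * η * h i ^ 3) := by
      field_simp
      ring
    have : 0 ≤ (h i ^ 2 * a i ω ^ 2 - η * X i ω ^ 2) ^ 2 / (2 * η * h i ^ 3) := by positivity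
    linarith
  have hint : ∀ i ∈ s, Integrable
      (fun ω => h i * (1 / (2 * η)) * a i ω ^ 4 + η / (2 * h i ^ 3) * X i ω ^ 4) μ :=
    fun i hi => ((hai i).const_mul _).add ((hXi i hi).const_mul _)
  calc _ ≤ ∫ ω, T * ∑ i ∈ s, (h i * (1 / (2 * η)) * a i ω ^ 4
              + η / (2 * h i ^ 3) * X i ω ^ 4) ∂μ :=
        integral_mono_of_nonneg (.of_forall fun ω => sq_nonneg _)
          ((integrable_finsetSum _ hint).const_mul _) (.of_forall key)
    _ = T * ∑ i ∈ s, (h i * (1 / (2 * η)) * ∫ ω, a i ω ^ 4 ∂μ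
              + η / (2 * h i ^ 3) * ∫ ω, X i ω ^ 4 ∂μ) := by
        rw [integral_const_mul, integral_finsetSum _ hint]
        congr 1
        refine Finset.sum_congr rfl fun i hi => ?_
        rw [integral_add ((hai i).const_mul _) ((hXi i hi).const_mul _), integral_const_mul,
          integral_const_mul]
    _ ≤ T * ∑ i ∈ s, h i * (η * (1 + K) / 2) := by
        refine mul_le_mul_of_nonneg_left (Finset.sum_le_sum fun i hi => ?_) hT0
        have hh := hpos i hi
        calc _ ≤ h i * (1 / (2 * η)) * η ^ 2 + η / (2 * h i ^ 3) * (K * h i ^ 4) := by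
              gcongr
              · exact ha4 i hi
              · exact hX4 i hi
          _ = _ := by field_simp
    _ = _ := by rw [← Finset.sum_mul, ← hT]; ring

/-- Centred pairwise independent variables are orthogonal in `L²`. -/
lemma integral_sq_sum_eq (s : Finset ℕ) (X : ℕ → Ω → ℝ) (hX : ∀ i ∈ s, MemLp (X i) 2 μ)
    (h0 : ∀ i ∈ s, ∫ ω, X i ω ∂μ = 0)
    (hind : Set.Pairwise ↑s fun i j => IndepFun (X i) (X j) μ) :
    ∫ ω, (∑ i ∈ s, X i ω) ^ 2 ∂μ = ∑ i ∈ s, ∫ ω, X i ω ^ 2 ∂μ := by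
  have hv := IndepFun.variance_sum hX hind
  have hm : MemLp (∑ i ∈ s, X i) 2 μ := memLp_finsetSum' s hX
  rw [variance_of_integral_eq_zero hm.aestronglyMeasurable.aemeasurable] at hv
  · simp only [Finset.sum_apply] at hv
    rw [hv]
    exact Finset.sum_congr rfl fun i hi => variance_of_integral_eq_zero
      (hX i hi).aestronglyMeasurable.aemeasurable (h0 i hi)
  · simp only [Finset.sum_apply]
    rw [integral_finsetSum _ fun i hi => (hX i hi).integrable (by norm_num)]
    exact Finset.sum_eq_zero h0

/-- Second moment of `∑ b_{k(i)} Xᵢ` when the bounded weights take only `M` distinct indices `k(i)`: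
within each block the weight factors out and the `Xᵢ` are orthogonal. -/
lemma integral_sq_block_sum_le (s : Finset ℕ) (M : ℕ) (k : ℕ → ℕ) (hk : ∀ i ∈ s, k i < M)
    (h : ℕ → ℝ) (hpos : ∀ i ∈ s, 0 ≤ h i) {K c m : ℝ} (hK : 0 ≤ K) (hm : ∀ i ∈ s, h i ≤ m)
    (b X : ℕ → Ω → ℝ) (hb : ∀ i ω, |b i ω| ≤ c)
    (hX : ∀ i ∈ s, MemLp (X i) 2 μ) (hX0 : ∀ i ∈ s, ∫ ω, X i ω ∂μ = 0)
    (hind : Set.Pairwise ↑s fun i j => IndepFun (X i) (X j) μ)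
    (hX2 : ∀ i ∈ s, ∫ ω, X i ω ^ 2 ∂μ ≤ K * h i ^ 2) :
    ∫ ω, (∑ i ∈ s, b (k i) ω * X i ω) ^ 2 ∂μ ≤ M ^ 2 * c ^ 2 * K * (∑ i ∈ s, h i) * m := by
  have hfib : ∀ ω, ∑ i ∈ s, b (k i) ω * X i ω
      = ∑ j ∈ Finset.range M, b j ω * ∑ i ∈ s with k i = j, X i ω := by
    intro ω
    rw [← Finset.sum_fiberwise_of_maps_to (s := s) (t := Finset.range M) (g := k)
      (fun i hi => Finset.mem_range.2 (hk i hi))]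
    refine Finset.sum_congr rfl fun j _ => ?_
    rw [Finset.mul_sum]
    refine Finset.sum_congr rfl fun i hi => ?_
    rw [(Finset.mem_filter.1 hi).2]
  have key : ∀ ω, (∑ i ∈ s, b (k i) ω * X i ω) ^ 2 ≤
      M * ∑ j ∈ Finset.range M, c ^ 2 * (∑ i ∈ s with k i = j, X i ω) ^ 2 := by
    intro ω
    rw [hfib]
    refine sq_sum_le_card_mul_sum_sq.trans ?_
    rw [Finset.card_range]
    gcongr with j hj
    rw [mul_pow]
    refine mul_le_mul_of_nonneg_right ?_ (sq_nonneg _)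
    rw [← sq_abs]
    exact pow_le_pow_left₀ (abs_nonneg _) (hb j ω) 2
  have hsub : ∀ j, ∀ i ∈ s.filter (fun i => k i = j), i ∈ s :=
    fun j i hi => (Finset.mem_filter.1 hi).1
  have hint : ∀ j, Integrable (fun ω => (∑ i ∈ s with k i = j, X i ω) ^ 2) μ := fun j =>
    (memLp_finsetSum _ fun i hi => hX i (hsub j i hi)).integrable_sq
  have hblock : ∀ j, ∫ ω, (∑ i ∈ s with k i = j, X i ω) ^ 2 ∂μ ≤ K * (∑ i ∈ s, h i) * m := by
    intro j
    rw [integral_sq_sum_eq _ X (fun i hi => hX i (hsub j i hi)) (fun i hi => hX0 i (hsub j i hi))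
      (hind.mono fun i hi => hsub j i hi)]
    calc _ ≤ ∑ i ∈ s, ∫ ω, X i ω ^ 2 ∂μ :=
          Finset.sum_le_sum_of_subset_of_nonneg (Finset.filter_subset _ _)
            fun i _ _ => integral_nonneg fun _ => sq_nonneg _
      _ ≤ ∑ i ∈ s, K * h i * m := by
          refine Finset.sum_le_sum fun i hi => (hX2 i hi).trans ?_
          have := hpos i hi
          rw [sq, ← mul_assoc]
          gcongr
          exact hm i hi
      _ = _ := by rw [← Finset.sum_mul, ← Finset.mul_sum]
  calc _ ≤ ∫ ω, M * ∑ j ∈ Finset.range M, c ^ 2 * (∑ i ∈ s with k i = j, X i ω) ^ 2 ∂μ :=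
        integral_mono_of_nonneg (.of_forall fun ω => sq_nonneg _)
          ((integrable_finsetSum _ fun j _ => (hint j).const_mul _).const_mul _) (.of_forall key)
    _ = M * ∑ j ∈ Finset.range M, c ^ 2 * ∫ ω, (∑ i ∈ s with k i = j, X i ω) ^ 2 ∂μ := by
        rw [integral_const_mul, integral_finsetSum _ fun j _ => (hint j).const_mul _]
        simp_rw [integral_const_mul]
    _ ≤ M * ∑ j ∈ Finset.range M, c ^ 2 * (K * (∑ i ∈ s, h i) * m) := by
        gcongr with j hj
        exact hblock j
    _ = _ := by rw [Finset.sum_const, Finset.card_range, nsmul_eq_mul]; ring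

end Sums

/-! ### Modulus of continuity in `L⁴` -/

/-- A bounded continuous process is uniformly continuous on `[0,T]` as a map into `L⁴`. -/
lemma exists_L4_modulus (μ : Measure Ω) [IsProbabilityMeasure μ] (T : ℝ)
    (ξ : ℝ → Ω → ℝ) (hξ : ∀ s, Measurable (ξ s)) (hcont : ∀ ω, Continuous fun t => ξ t ω)
    (C : ℝ) (hbdd : ∀ t ω, |ξ t ω| ≤ C) {ε : ℝ} (hε : 0 < ε) :
    ∃ δ > 0, ∀ s ∈ Set.Icc 0 T, ∀ u ∈ Set.Icc 0 T, |s - u| < δ →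
      ∫ ω, (ξ s ω - ξ u ω) ^ 4 ∂μ ≤ ε := by
  have hG : Continuous fun p : ℝ × ℝ => ∫ ω, (ξ p.1 ω - ξ p.2 ω) ^ 4 ∂μ := by
    refine continuous_of_dominated (bound := fun _ => (C + C) ^ 4) ?_ ?_ (integrable_const _) ?_
    · intro p
      exact (((hξ p.1).sub (hξ p.2)).pow_const 4).aestronglyMeasurable
    · intro p
      refine .of_forall fun ω => ?_
      rw [norm_pow]
      refine pow_le_pow_left₀ (norm_nonneg _) ((norm_sub_le _ _).trans ?_) 4
      exact add_le_add (hbdd _ ω) (hbdd _ ω)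
    · refine .of_forall fun ω => ?_
      exact (((hcont ω).comp continuous_fst).sub ((hcont ω).comp continuous_snd)).pow 4
  have hU := (isCompact_Icc.prod isCompact_Icc : IsCompact (Set.Icc 0 T ×ˢ Set.Icc 0 T))
    |>.uniformContinuousOn_of_continuous hG.continuousOn
  obtain ⟨δ, hδ, H⟩ := Metric.uniformContinuousOn_iff.1 hU ε hε
  refine ⟨δ, hδ, fun s hs u hu hsu => ?_⟩
  have := H (s, u) ⟨hs, hu⟩ (u, u) ⟨hu, hu⟩ (by
    rw [Prod.dist_eq]; simpa [Real.dist_eq, hδ] using hsu)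
  simp only [sub_self, ne_eq, OfNat.ofNat_ne_zero, not_false_eq_true, zero_pow,
    integral_zero, dist_zero_right] at this
  exact (le_abs_self _).trans this.le

/-! ### Riemann sums along partitions -/

section Partition
variable {T : ℝ} {N : ℕ → ℕ} {t : ℕ → ℕ → ℝ}

/-- The inner supremum over `j ∈ Finset.range r` is `0` for `j` out of range, so the outer supremum is
over a bounded family and dominates every step. -/
lemma step_le_mesh {r : ℕ} (x : ℕ → ℝ) (i : ℕ) (hi : i ∈ Finset.range r) :
    x (i + 1) - x i ≤ ⨆ j ∈ Finset.range r, (x (j + 1) - x j) := by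
  set f : ℕ → ℝ := fun j => ⨆ _ : j ∈ Finset.range r, (x (j + 1) - x j) with hf
  have hb : BddAbove (Set.range f) := by
    refine ((((Finset.range r).finite_toSet.image f).insert 0).subset ?_).bddAbove
    rintro _ ⟨j, rfl⟩
    by_cases hj : j ∈ Finset.range r
    · exact Or.inr ⟨j, hj, rfl⟩
    · left
      simp only [hf, hj]
      exact Real.iSup_of_isEmpty _
  calc _ = f i := by simp only [hf, hi]; exact (ciSup_const (ι := True)).symm
    _ ≤ _ := le_ciSup hb i

lemma abs_riemann_sum_sub_integral_le {r : ℕ} {x : ℕ → ℝ} (h0 : x 0 = 0) (hend : x r = T)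
    (hmono : StrictMonoOn x (Set.Iic r)) {f : ℝ → ℝ} (hf : Continuous f) {ε δ : ℝ}
    (hfδ : ∀ s ∈ Set.Icc 0 T, ∀ u ∈ Set.Icc 0 T, |s - u| < δ → |f s - f u| ≤ ε)
    (hδ : ∀ i ∈ Finset.range r, x (i + 1) - x i < δ) :
    |∑ i ∈ Finset.range r, f (x (i + 1)) * (x (i + 1) - x i) - ∫ s in (0:ℝ)..T, f s| ≤ ε * T := by
  have hI := intervalIntegral.sum_integral_adjacent_intervals (f := f) (μ := volume) (a := x)
    (n := r) fun k _ => hf.intervalIntegrable _ _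
  rw [h0, hend] at hI
  rw [← hI, ← Finset.sum_sub_distrib]
  refine (Finset.abs_sum_le_sum_abs _ _).trans ?_
  have hmem : ∀ i ≤ r, x i ∈ Set.Icc 0 T := fun i hi =>
    ⟨h0 ▸ hmono.monotoneOn (Set.mem_Iic.2 (Nat.zero_le r)) hi (Nat.zero_le i),
      hend ▸ hmono.monotoneOn hi (Set.mem_Iic.2 le_rfl) hi⟩
  have hT : ε * T = ∑ i ∈ Finset.range r, ε * (x (i + 1) - x i) := by
    rw [← Finset.mul_sum, Finset.sum_range_sub, h0, hend, sub_zero]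
  rw [hT]
  refine Finset.sum_le_sum fun i hi => ?_
  have hir := Finset.mem_range.1 hi
  have hlt : x i < x (i + 1) := hmono hir.le (Set.mem_Iic.2 hir) (Nat.lt_succ_self i)
  have e : f (x (i + 1)) * (x (i + 1) - x i) - ∫ s in x i..x (i + 1), f s
      = ∫ s in x i..x (i + 1), (f (x (i + 1)) - f s) := by
    rw [intervalIntegral.integral_sub (by simp) (hf.intervalIntegrable _ _),
      intervalIntegral.integral_const, smul_eq_mul, mul_comm]
  rw [e, ← Real.norm_eq_abs, ← abs_of_pos (sub_pos.2 hlt)]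
  refine intervalIntegral.norm_integral_le_of_norm_le_const fun s hs => ?_
  rw [Set.uIoc_of_le hlt.le] at hs
  have h1 := hmem i hir.le
  have h2 := hmem (i + 1) hir
  have := hδ i hi
  refine hfδ _ h2 s ⟨h1.1.trans hs.1.le, hs.2.trans h2.2⟩ ?_
  rw [abs_of_nonneg (sub_nonneg.2 hs.2)]
  linarith [hs.1]

lemma tendsto_riemann_sum_sub_integral (h0 : ∀ n, t n 0 = 0) (hend : ∀ n, t n (N n) = T)
    (hmono : ∀ n, StrictMonoOn (t n) (Set.Iic (N n)))
    (hmesh : Tendsto (fun n => ⨆ i ∈ Finset.range (N n), (t n (i + 1) - t n i)) atTop (nhds 0))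
    {f : ℝ → ℝ} (hf : Continuous f) :
    Tendsto (fun n => ∑ i ∈ Finset.range (N n), f (t n (i + 1)) * (t n (i + 1) - t n i)
      - ∫ s in (0:ℝ)..T, f s) atTop (nhds 0) := by
  rw [Metric.tendsto_atTop']
  intro ε hε
  have hU := (isCompact_Icc : IsCompact (Set.Icc 0 T)).uniformContinuousOn_of_continuous
    hf.continuousOn
  have hT1 : 0 < |T| + 1 := by positivity
  obtain ⟨δ, hδ, H⟩ := Metric.uniformContinuousOn_iff.1 hU (ε / (|T| + 1)) (by positivity)
  obtain ⟨n0, hn0⟩ := eventually_atTop.1 (hmesh.eventually_lt_const hδ)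
  refine ⟨n0, fun n hn => ?_⟩
  rw [Real.dist_eq, sub_zero]
  refine (abs_riemann_sum_sub_integral_le (h0 n) (hend n) (hmono n) hf
    (fun s hs u hu hsu => (H s hs u hu hsu).le)
    fun i hi => (step_le_mesh _ i hi).trans_lt (hn0 n hn.le)).trans_lt ?_
  rw [div_mul_eq_mul_div, div_lt_iff₀ hT1]
  have := le_abs_self T
  nlinarith

end Partition

/-! ### Brownian increments and the mean-square limit -/

/-- The earlier increment is measurable with respect to the past `σ(w u, u ≤ c)`, of which the later
increment is independent. -/
lemma IsBrownianMotion.indepFun_incr {μ : Measure Ω} {w : ℝ → Ω → ℝ}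
    (hw : IsBrownianMotion μ w) {a b c d : ℝ} (ha : 0 ≤ a) (hab : a ≤ b) (hbc : b ≤ c)
    (hcd : c ≤ d) :
    IndepFun (fun ω => w b ω - w a ω) (fun ω => w d ω - w c ω) μ := by
  have h := hw.2.2.2.2 c d (ha.trans (hab.trans hbc)) hcd
  refine IndepFun.symm ((IndepFun_iff_Indep _ _ _).2 ?_)
  rw [← BorelSpace.measurable_eq (α := ℝ)] at h
  refine indep_of_indep_of_le_right h (Measurable.comap_le ?_)
  have hmw : ∀ u ∈ Set.Icc 0 c, Measurable[⨆ u ∈ Set.Icc (0:ℝ) c,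
      MeasurableSpace.comap (w u) inferInstance] (w u) := fun u hu =>
    Measurable.mono (comap_measurable (w u)) (le_iSup₂_of_le u hu le_rfl) le_rfl
  exact Measurable.sub (hmw b ⟨ha.trans hab, hbc⟩) (hmw a ⟨ha, hab.trans hbc⟩)

/-- L² convergence of quadratic-variation sums with continuous bounded weights that are
independent of the corresponding Brownian increments. -/
theorem quadratic_variation_weighted_L2 {mΩ : MeasurableSpace Ω}
    (μ : Measure Ω) [IsProbabilityMeasure μ] (T : ℝ) (hT : 0 < T)
    (w : ℝ → Ω → ℝ) (hw : IsBrownianMotion μ w)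
    (ξ : ℝ → Ω → ℝ) (hmeas : Measurable (Function.uncurry ξ))
    (hcont : ∀ ω, Continuous fun t => ξ t ω)
    (C : ℝ) (hbdd : ∀ t ω, |ξ t ω| ≤ C)
    -- a sequence of partitions 0 = t n 0 < t n 1 < ⋯ < t n (N n) = T with mesh → 0
    (N : ℕ → ℕ) (t : ℕ → ℕ → ℝ)
    (h0 : ∀ n, t n 0 = 0) (hend : ∀ n, t n (N n) = T)
    (hmono : ∀ n, StrictMonoOn (t n) (Set.Iic (N n)))
    (hmesh : Tendsto (fun n => ⨆ i ∈ Finset.range (N n), (t n (i + 1) - t n i)) atTop (nhds 0))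
    -- the weight ξ(t_{i+1}) is independent of the increment Δw_{t_i}
    (hindep : ∀ n, ∀ i ∈ Finset.range (N n),
      IndepFun (ξ (t n (i + 1))) (fun ω => w (t n (i + 1)) ω - w (t n i) ω) μ) :
    Tendsto (fun n =>
        ∫ ω, (∑ i ∈ Finset.range (N n),
            ξ (t n (i + 1)) ω * (w (t n (i + 1)) ω - w (t n i) ω) ^ 2
          - ∫ s in (0:ℝ)..T, ξ s ω) ^ 2 ∂μ)
      atTop (nhds 0) := by
  have hξ : ∀ s, Measurable (ξ s) := fun s => hmeas.comp measurable_prodMk_left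
  have hC : 0 ≤ C := by
    obtain ⟨ω⟩ := nonempty_of_isProbabilityMeasure μ
    exact (abs_nonneg _).trans (hbdd 0 ω)
  set K := chiSqBound with hKdef
  have hK : 0 ≤ K := chiSqBound_nonneg
  have hmem : ∀ n, ∀ i ≤ N n, t n i ∈ Set.Icc 0 T := fun n i hi =>
    ⟨h0 n ▸ (hmono n).monotoneOn (Set.mem_Iic.2 (Nat.zero_le _)) hi (Nat.zero_le i),
      hend n ▸ (hmono n).monotoneOn hi (Set.mem_Iic.2 le_rfl) hi⟩
  set h : ℕ → ℕ → ℝ := fun n i => t n (i + 1) - t n i with hh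
  set D : ℕ → ℕ → Ω → ℝ := fun n i ω => w (t n (i + 1)) ω - w (t n i) ω with hDdef
  set X : ℕ → ℕ → Ω → ℝ := fun n i ω => D n i ω ^ 2 - h n i with hXdef
  have hD : ∀ n i, Measurable (D n i) := fun n i => (hw.1 _).sub (hw.1 _)
  have hpos : ∀ n, ∀ i ∈ Finset.range (N n), 0 < h n i := fun n i hi =>
    sub_pos.2 (hmono n (Finset.mem_range.1 hi).le (Set.mem_Iic.2 (Finset.mem_range.1 hi))
      (Nat.lt_succ_self i))
  have hsum : ∀ n, ∑ i ∈ Finset.range (N n), h n i = T := fun n => by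
    rw [hh, Finset.sum_range_sub, h0, hend, sub_zero]
  have hmap : ∀ n, ∀ i ∈ Finset.range (N n), μ.map (D n i) = gaussianReal 0 (h n i).toNNReal :=
    fun n i hi => hw.2.2.2.1 _ _ (hmem n i (Finset.mem_range.1 hi).le).1
      (sub_pos.1 (hpos n i hi)).le
  have hXp : ∀ (p : ℕ) n, ∀ i ∈ Finset.range (N n), MemLp (X n i) p μ := fun p n i hi =>
    memLp_incr_sq_sub (hD n i) (hmap n i hi) p
  have hindlt : ∀ n, ∀ j ∈ Finset.range (N n), ∀ i < j, IndepFun (X n i) (X n j) μ := by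
    intro n j hj i hij
    have hj' := Finset.mem_range.1 hj
    have hi' : i + 1 ≤ N n := by omega
    have := hw.indepFun_incr (hmem n i (by omega)).1
      ((hmono n).monotoneOn (Set.mem_Iic.2 (by omega)) hi' (Nat.le_succ i))
      ((hmono n).monotoneOn hi' (Set.mem_Iic.2 hj'.le) hij)
      (sub_pos.1 (hpos n j hj)).le
    exact this.comp (φ := fun x => x ^ 2 - h n i) (ψ := fun x => x ^ 2 - h n j)
      (by fun_prop) (by fun_prop)
  have hind : ∀ n, Set.Pairwise ↑(Finset.range (N n))
      fun i j => IndepFun (X n i) (X n j) μ := by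
    intro n i hi j hj hij
    rcases lt_or_gt_of_ne hij with hlt | hlt
    · exact hindlt n j hj i hlt
    · exact (hindlt n i hi j hlt).symm
  set R : ℕ → Ω → ℝ := fun n ω => ∑ i ∈ Finset.range (N n), ξ (t n (i + 1)) ω * h n i
    - ∫ s in (0:ℝ)..T, ξ s ω with hRdef
  have hRm : ∀ n, Measurable (R n) := by
    intro n
    refine (Finset.measurable_sum _ fun i _ => (hξ _).mul_const _).sub ?_
    simp_rw [intervalIntegral.integral_of_le hT.le]
    exact (hmeas.stronglyMeasurable.integral_prod_left).measurable
  have hRb : ∀ n ω, |R n ω| ≤ C * T + C * T := by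
    intro n ω
    refine (abs_sub _ _).trans (add_le_add ?_ ?_)
    · refine (Finset.abs_sum_le_sum_abs _ _).trans ?_
      rw [← hsum n, Finset.mul_sum]
      refine Finset.sum_le_sum fun i hi => ?_
      rw [abs_mul, abs_of_pos (hpos n i hi)]
      exact mul_le_mul_of_nonneg_right (hbdd _ _) (hpos n i hi).le
    · have := intervalIntegral.norm_integral_le_of_norm_le_const (a := 0) (b := T)
        (f := fun s => ξ s ω) (C := C) fun s _ => hbdd s ω
      rwa [sub_zero, abs_of_pos hT] at this
  have hRsq : ∀ n, Integrable (fun ω => R n ω ^ 2) μ := fun n =>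
    Integrable.of_bound ((hRm n).pow_const 2).aestronglyMeasurable ((C * T + C * T) ^ 2)
      (.of_forall fun ω => by
        rw [norm_pow]; exact pow_le_pow_left₀ (norm_nonneg _) (hRb n ω) 2)
  have hRlim : Tendsto (fun n => ∫ ω, R n ω ^ 2 ∂μ) atTop (nhds 0) := by
    have := tendsto_integral_of_dominated_convergence (μ := μ) (F := fun n ω => R n ω ^ 2)
      (f := fun _ => 0) (fun _ => (C * T + C * T) ^ 2)
      (fun n => ((hRm n).pow_const 2).aestronglyMeasurable) (integrable_const _)
      (fun n => .of_forall fun ω => by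
        rw [norm_pow]; exact pow_le_pow_left₀ (norm_nonneg _) (hRb n ω) 2)
      (.of_forall fun ω => by
        simpa using (tendsto_riemann_sum_sub_integral h0 hend hmono hmesh (hcont ω)).pow 2)
    simpa using this
  rw [Metric.tendsto_atTop']
  intro ε hε
  -- With this `η` the bound `3 * T ^ 2 * η * (1 + K) / 2` for `3 * E A ^ 2` equals `ε / 2`.
  set η := ε / (3 * T ^ 2 * (1 + K)) with hηdef
  have hη : 0 < η := by positivity
  obtain ⟨δ, hδ, hmod⟩ := exists_L4_modulus μ T ξ hξ hcont C hbdd (ε := η ^ 2) (by positivity)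
  -- `k n i` indexes the block of length `δ` containing `t n (i + 1)`, and `M` counts the blocks
  -- meeting `[0, T]`.
  set M := ⌊T / δ⌋₊ + 1 with hM
  set k : ℕ → ℕ → ℕ := fun n i => ⌊t n (i + 1) / δ⌋₊ with hk
  have hBlim : Tendsto (fun n => 3 * ((M:ℝ) ^ 2 * C ^ 2 * K * T *
      (⨆ i ∈ Finset.range (N n), (t n (i + 1) - t n i)) + ∫ ω, R n ω ^ 2 ∂μ)) atTop (nhds 0) := by
    simpa using ((hmesh.const_mul ((M:ℝ) ^ 2 * C ^ 2 * K * T)).add hRlim).const_mul 3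
  obtain ⟨n0, hn0⟩ := eventually_atTop.1 (hBlim.eventually_lt_const (half_pos hε))
  refine ⟨n0, fun n hn => ?_⟩
  rw [Real.dist_eq, sub_zero, abs_of_nonneg (integral_nonneg fun _ => sq_nonneg _)]
  set s := Finset.range (N n) with hs
  set A : Ω → ℝ := fun ω => ∑ i ∈ s, (ξ (t n (i + 1)) ω - ξ (k n i * δ) ω) * X n i ω with hA
  set B : Ω → ℝ := fun ω => ∑ i ∈ s, ξ (k n i * δ) ω * X n i ω with hB
  have hXmem : ∀ r : ℝ, ∀ i ∈ s, MemLp (fun ω => ξ r ω * X n i ω) 2 μ := fun r i hi =>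
    MemLp.mul' (p := ⊤) (hXp 2 n i hi)
      (memLp_top_of_bound (hξ r).aestronglyMeasurable C (.of_forall (hbdd r)))
  have hAm : MemLp A 2 μ := by
    refine memLp_finsetSum _ fun i hi => ?_
    simp_rw [sub_mul]
    exact (hXmem _ i hi).sub (hXmem _ i hi)
  have hBm : MemLp B 2 μ := memLp_finsetSum _ fun i hi => hXmem _ i hi
  have hAle : ∫ ω, A ω ^ 2 ∂μ ≤ T ^ 2 * (η * (1 + K) / 2) := by
    rw [← hsum n]
    refine integral_sq_weighted_sum_le s (h n) (hpos n) _ (X n)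
      (fun i => (hξ _).sub (hξ _)) (c := C + C)
      (fun i ω => (abs_sub _ _).trans (add_le_add (hbdd _ _) (hbdd _ _))) hη ?_
      (fun i hi => by exact_mod_cast hXp 4 n i hi)
      (fun i hi => integral_incr_sq_sub_pow_four_le (hD n i) (hpos n i hi).le (hmap n i hi))
    intro i hi
    have h1 := hmem n (i + 1) (Finset.mem_range.1 hi)
    have h2 : (k n i : ℝ) * δ ≤ t n (i + 1) :=
      (le_div_iff₀ hδ).1 (Nat.floor_le (div_nonneg h1.1 hδ.le))
    have h3 : t n (i + 1) < (k n i + 1) * δ := (div_lt_iff₀ hδ).1 (Nat.lt_floor_add_one _)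
    refine hmod _ h1 _ ⟨by positivity, h2.trans h1.2⟩ ?_
    rw [abs_of_nonneg (sub_nonneg.2 h2)]
    linarith
  have hBle : ∫ ω, B ω ^ 2 ∂μ ≤ (M:ℝ) ^ 2 * C ^ 2 * K * T *
      (⨆ i ∈ Finset.range (N n), (t n (i + 1) - t n i)) := by
    rw [← hsum n]
    refine integral_sq_block_sum_le s M (k n) ?_ (h n) (fun i hi => (hpos n i hi).le) hK
      (step_le_mesh _) (fun j ω => ξ (j * δ) ω) (X n) (fun j ω => hbdd _ _)
      (fun i hi => by exact_mod_cast hXp 2 n i hi)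
      (fun i hi => integral_incr_sq_sub (hD n i) (hpos n i hi).le (hmap n i hi)) (hind n)
      (fun i hi => integral_incr_sq_sub_pow_two_le (hD n i) (hpos n i hi).le (hmap n i hi))
    intro i hi
    have h1 := hmem n (i + 1) (Finset.mem_range.1 hi)
    exact Nat.lt_succ_of_le (Nat.floor_le_floor (div_le_div_of_nonneg_right h1.2 hδ.le))
  have hdec : ∀ ω, ∑ i ∈ s, ξ (t n (i + 1)) ω * D n i ω ^ 2 - ∫ s in (0:ℝ)..T, ξ s ω
      = A ω + B ω + R n ω := by
    intro ω
    simp only [hA, hB, hRdef, hXdef]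
    rw [← Finset.sum_add_distrib, ← add_sub_assoc, ← Finset.sum_add_distrib]
    congr 1
    exact Finset.sum_congr rfl fun i _ => by ring
  have hη2 : 3 * (T ^ 2 * (η * (1 + K) / 2)) = ε / 2 := by
    rw [hηdef]
    field_simp
  have hAB : Integrable (fun ω => A ω ^ 2 + B ω ^ 2) μ :=
    hAm.integrable_sq.add hBm.integrable_sq
  calc _ ≤ ∫ ω, 3 * (A ω ^ 2 + B ω ^ 2 + R n ω ^ 2) ∂μ := by
        refine integral_mono_of_nonneg (.of_forall fun ω => sq_nonneg _)
          ((hAB.add (hRsq n)).const_mul 3)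
          (.of_forall fun ω => ?_)
        have := hdec ω
        simp only [hDdef] at this
        simp only [this]
        nlinarith [sq_nonneg (A ω - B ω), sq_nonneg (A ω - R n ω), sq_nonneg (B ω - R n ω)]
    _ = 3 * (∫ ω, A ω ^ 2 ∂μ) + 3 * (∫ ω, B ω ^ 2 ∂μ + ∫ ω, R n ω ^ 2 ∂μ) := by
        rw [integral_const_mul, integral_add hAB (hRsq n),
          integral_add hAm.integrable_sq hBm.integrable_sq]
        ring
    _ ≤ 3 * (T ^ 2 * (η * (1 + K) / 2)) + 3 * ((M:ℝ) ^ 2 * C ^ 2 * K * T *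
          (⨆ i ∈ Finset.range (N n), (t n (i + 1) - t n i)) + ∫ ω, R n ω ^ 2 ∂μ) := by
        gcongr
    _ < ε := by
        rw [hη2]
        linarith [hn0 n hn.le]
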